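/- (Norm duality for l^r-Herz type mixed-norm spaces.) Let r ∈ [1,∞], n ∈ ℕ, p⃗, q⃗ ∈ [1,∞]^n, and α⃗ ∈ ℝⁿ. Then for every sequence f = {f(j,·)}_{j∈ℤ} of measurable functions on ℝⁿ, ‖f‖_{(Ė^{α⃗,p⃗}_{q⃗}(ℝⁿ), l^r)} = sup{ ‖ Σ_{j∈ℤ} |f(j,·) g(j,·)| ‖_{L¹(ℝⁿ)} : g ∈ (Ė^{-α⃗,p⃗'}_{q⃗'}(ℝⁿ), l^{r'}) with ‖g‖_{(Ė^{-α⃗,p⃗'}_{q⃗'}(ℝⁿ), l^{r'})} = 1 }. -/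

import Mathlib

open MeasureTheory ENNReal Filter

noncomputable section

/-- The dyadic annulus `R_k = (-2^k, 2^k) \ (-2^(k-1), 2^(k-1))` in `ℝ`. -/
def herzRing (k : ℤ) : Set ℝ :=
  Set.Ioo (-(2 : ℝ) ^ k) ((2 : ℝ) ^ k) \ Set.Ioo (-(2 : ℝ) ^ (k - 1)) ((2 : ℝ) ^ (k - 1))

/-- The `L^q` "norm" (valued in `ℝ≥0∞`) of an `ℝ≥0∞`-valued function on a set `s ⊆ ℝ`,
with the usual modification when `q = ∞`. -/
def lqNormOn (q : ℝ≥0∞) (s : Set ℝ) (g : ℝ → ℝ≥0∞) : ℝ≥0∞ :=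
  if q = ∞ then essSup (s.indicator g) volume
  else (∫⁻ x in s, g x ^ q.toReal) ^ (1 / q.toReal)

/-- The `l^p` norm over `ℤ` of an `ℝ≥0∞`-valued sequence, with the usual modification
when `p = ∞`. -/
def lpZNorm (p : ℝ≥0∞) (a : ℤ → ℝ≥0∞) : ℝ≥0∞ :=
  if p = ∞ then ⨆ k, a k
  else (∑' k : ℤ, a k ^ p.toReal) ^ (1 / p.toReal)

/-- The one-dimensional Herz norm `K^{α,p}_q` of an `ℝ≥0∞`-valued function on `ℝ`. -/
def herzNorm1 (α : ℝ) (p q : ℝ≥0∞) (g : ℝ → ℝ≥0∞) : ℝ≥0∞ :=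
  lpZNorm p fun k => ENNReal.ofReal ((2 : ℝ) ^ ((k : ℝ) * α)) * lqNormOn q (herzRing k) g

/-- The mixed-norm Herz norm on `ℝⁿ` of an `ℝ≥0∞`-valued function: the Herz norm
`K^{α_1,p_1}_{q_1}` is applied in the first variable, then `K^{α_2,p_2}_{q_2}` in the
second variable, …, and finally `K^{α_n,p_n}_{q_n}` in the last variable. -/
def mixedHerzNormE : (n : ℕ) → (Fin n → ℝ) → (Fin n → ℝ≥0∞) → (Fin n → ℝ≥0∞) →
    ((Fin n → ℝ) → ℝ≥0∞) → ℝ≥0∞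
  | 0, _, _, _, f => f fun i => i.elim0
  | n + 1, α, p, q, f =>
    herzNorm1 (α (Fin.last n)) (p (Fin.last n)) (q (Fin.last n)) fun xlast =>
      mixedHerzNormE n (Fin.init α) (Fin.init p) (Fin.init q) fun y => f (Fin.snoc y xlast)

/-- The mixed-norm Herz norm `‖f‖_{Ė^{α,p}_q(ℝⁿ)}` of a complex-valued function on `ℝⁿ`. -/
def herzNormC (n : ℕ) (α : Fin n → ℝ) (p q : Fin n → ℝ≥0∞) (f : (Fin n → ℝ) → ℂ) : ℝ≥0∞ :=
  mixedHerzNormE n α p q fun x => (‖f x‖₊ : ℝ≥0∞)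

/-- `I_m = (-2^m, -2^{-m}] ∪ [2^{-m}, 2^m)`. -/
def herzI (m : ℕ) : Set ℝ :=
  Set.Ioc (-(2 : ℝ) ^ (m : ℤ)) (-(2 : ℝ) ^ (-(m : ℤ))) ∪
    Set.Ico ((2 : ℝ) ^ (-(m : ℤ))) ((2 : ℝ) ^ (m : ℤ))

/-- `A_m = I_m^n ⊆ ℝⁿ`. -/
def herzA (n m : ℕ) : Set (Fin n → ℝ) := Set.univ.pi fun _ => herzI m

/-- The class `H(ℝⁿ)` of simple functions built from finitely many pairwise disjoint
parallelepipeds contained in some `A_m`. -/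
def IsHSimple (n : ℕ) (f : (Fin n → ℝ) → ℂ) : Prop :=
  ∃ (m N : ℕ) (a : Fin N → ℂ) (E : Fin N → Fin n → Set ℝ),
    (∀ k i, MeasurableSet (E k i)) ∧
    (∀ k, Set.univ.pi (E k) ⊆ herzA n m) ∧
    (Pairwise fun k l => Disjoint (Set.univ.pi (E k)) (Set.univ.pi (E l))) ∧
    f = fun x => ∑ k, (Set.univ.pi (E k)).indicator (fun _ => a k) x

/-- The Euclidean ball `B(x,r)` in `ℝⁿ`. -/
def eucBall (n : ℕ) (x : Fin n → ℝ) (r : ℝ) : Set (Fin n → ℝ) :=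
  {y | ∑ i, (y i - x i) ^ 2 < r ^ 2}

/-- The (uncentered) maximal operator in the `k`-th variable. -/
def maxVar (n : ℕ) (k : Fin n) (g : (Fin n → ℝ) → ℝ≥0∞) : (Fin n → ℝ) → ℝ≥0∞ :=
  fun x => ⨆ (a : ℝ) (b : ℝ) (_ : x k ∈ Set.Ioo a b),
    (volume (Set.Ioo a b))⁻¹ * ∫⁻ y in Set.Ioo a b, g (Function.update x k y)

/-- The centered Hardy–Littlewood maximal operator on `ℝⁿ`. -/
def centeredMax (n : ℕ) (g : (Fin n → ℝ) → ℝ≥0∞) : (Fin n → ℝ) → ℝ≥0∞ :=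
  fun x => ⨆ (r : ℝ) (_ : 0 < r),
    (volume (eucBall n x r))⁻¹ * ∫⁻ y in eucBall n x r, g y

/-- The composition `M_n ∘ ⋯ ∘ M_1` of the maximal operators in each variable. -/
def iteratedMax (n : ℕ) (g : (Fin n → ℝ) → ℝ≥0∞) : (Fin n → ℝ) → ℝ≥0∞ :=
  (List.ofFn fun k : Fin n => maxVar n k).foldl (fun h F => F h) g

/-- The iterated maximal operator `ℳ_t(f) = [M_n ⋯ M_1(|f|^t)]^{1/t}`. -/
def iterMaxPow (n : ℕ) (t : ℝ) (f : (Fin n → ℝ) → ℂ) : (Fin n → ℝ) → ℝ≥0∞ :=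
  fun x => iteratedMax n (fun y => (‖f y‖₊ : ℝ≥0∞) ^ t) x ^ (1 / t)

/-- The `l^r`-Herz type mixed norm of a sequence of functions on `ℝⁿ`. -/
def herzSeqNorm (n : ℕ) (r : ℝ≥0∞) (α : Fin n → ℝ) (p q : Fin n → ℝ≥0∞)
    (F : ℤ → (Fin n → ℝ) → ℂ) : ℝ≥0∞ :=
  mixedHerzNormE n α p q fun x => lpZNorm r fun j => (‖F j x‖₊ : ℝ≥0∞)

/-- `N` is a ball quasi-Banach function norm on (nonnegative extended-real-valued)
measurable functions on `ℝⁿ`. -/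
def IsBQBFNorm (n : ℕ) (N : ((Fin n → ℝ) → ℝ≥0∞) → ℝ≥0∞) : Prop :=
  (∀ f : (Fin n → ℝ) → ℝ≥0∞, Measurable f → N f = 0 → f =ᵐ[volume] 0) ∧
  (∀ f g : (Fin n → ℝ) → ℝ≥0∞, Measurable f → Measurable g →
    (∀ᵐ x ∂volume, g x ≤ f x) → N g ≤ N f) ∧
  (∀ (fm : ℕ → (Fin n → ℝ) → ℝ≥0∞) (f : (Fin n → ℝ) → ℝ≥0∞),
    (∀ m, Measurable (fm m)) → Measurable f →
    (∀ᵐ x ∂volume, Monotone (fun m => fm m x) ∧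
      Tendsto (fun m => fm m x) atTop (nhds (f x))) →
    Monotone (fun m => N (fm m)) ∧ Tendsto (fun m => N (fm m)) atTop (nhds (N f))) ∧
  (∀ (x : Fin n → ℝ) (r : ℝ), 0 < r →
    N ((eucBall n x r).indicator fun _ => (1 : ℝ≥0∞)) ≠ ∞)

/-- `N` is a ball Banach function norm: a ball quasi-Banach function norm that moreover
satisfies the triangle inequality and locally dominates the `L¹` norm. -/
def IsBallBanachNorm (n : ℕ) (N : ((Fin n → ℝ) → ℝ≥0∞) → ℝ≥0∞) : Prop :=
  IsBQBFNorm n N ∧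
  (∀ f g : (Fin n → ℝ) → ℝ≥0∞, Measurable f → Measurable g → N (f + g) ≤ N f + N g) ∧
  (∀ (x : Fin n → ℝ) (r : ℝ), 0 < r → ∃ C : ℝ≥0∞, 0 < C ∧ C ≠ ∞ ∧
    ∀ f : (Fin n → ℝ) → ℝ≥0∞, Measurable f → (∫⁻ y in eucBall n x r, f y) ≤ C * N f)

/-- The associate (Köthe dual) norm of a function norm `N`. -/
def assocNormOf (n : ℕ) (N : ((Fin n → ℝ) → ℝ≥0∞) → ℝ≥0∞)
    (f : (Fin n → ℝ) → ℝ≥0∞) : ℝ≥0∞ :=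
  ⨆ (g : (Fin n → ℝ) → ℝ≥0∞) (_ : Measurable g) (_ : N g = 1), ∫⁻ x, f x * g x

/-- The `θ`-convexification of a function norm: `‖f‖_{X^θ} = ‖|f|^θ‖_X^{1/θ}`
(here stated with `θ` in place of `1/p`, so `X^{1/p}` is `convexPow n (1/p) N`). -/
def convexPow (n : ℕ) (θ : ℝ) (N : ((Fin n → ℝ) → ℝ≥0∞) → ℝ≥0∞)
    (f : (Fin n → ℝ) → ℝ≥0∞) : ℝ≥0∞ :=
  N (fun x => f x ^ θ) ^ (1 / θ)

/-- The associate space norm of the mixed-norm Herz space, for complex-valued functions. -/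
def herzAssocNormC (n : ℕ) (α : Fin n → ℝ) (p q : Fin n → ℝ≥0∞)
    (f : (Fin n → ℝ) → ℂ) : ℝ≥0∞ :=
  ⨆ (g : (Fin n → ℝ) → ℂ) (_ : Measurable g) (_ : herzNormC n α p q g = 1),
    ∫⁻ x, (‖f x * g x‖₊ : ℝ≥0∞)

/-!
A pair of norms on the nonnegative measurable functions of a measure space is associate when each is
the supremum of the pairings against the unit ball of the other. Asking that countably many test
functions suffice, and that they can be chosen measurably when the function depends measurably on a
parameter, makes this notion stable under mixed norms: the test functions of a mixed norm are the
products of those of the outer norm with those of the inner norms, whose parameter is the outer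
variable. Associate pairs are also stable under reciprocal weights and under restriction along a
measurable embedding. For `L^q` the test functions come from the equality case of Hölder's
inequality, and `x ↦ (k, x)`, with `k` the index of the annulus of `x`, embeds `ℝ` into `ℤ × ℝ` and
exhibits the one-dimensional Herz norm as the restriction of a weighted `ℓ^p(L^q)` norm. Truncating
and normalizing the test functions turns the unit ball into the unit sphere.
-/

universe u

/-- A family of measurable test functions `g i` on `Z × X` whose slices lie in the unit ball of `N'`
and which recover `N (f (z, ·))` for every value of the parameter `z`. -/
structure IsNormingFamily {ι Z X : Type*} [MeasurableSpace Z] [MeasurableSpace X] (μ : Measure X)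
    (N N' : (X → ℝ≥0∞) → ℝ≥0∞) (f : Z × X → ℝ≥0∞) (g : ι → Z × X → ℝ≥0∞) : Prop where
  measurable : ∀ i, Measurable (g i)
  dual_le_one : ∀ i z, N' (fun x => g i (z, x)) ≤ 1
  le_iSup : ∀ z, N (fun x => f (z, x)) ≤ ⨆ i, ∫⁻ x, f (z, x) * g i (z, x) ∂μ

/-- `N` is the associate (Köthe dual) norm of `N'`, in a form stable under mixed norms: when `f`
depends measurably on a parameter, countably many test functions, themselves measurable in the
parameter, suffice to compute `N f`. -/
structure IsAssocNorm {X : Type u} [MeasurableSpace X] (μ : Measure X)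
    (N N' : (X → ℝ≥0∞) → ℝ≥0∞) : Prop where
  lintegral_mul_le : ∀ {f g : X → ℝ≥0∞}, Measurable f → Measurable g →
    ∫⁻ x, f x * g x ∂μ ≤ N f * N' g
  exists_norming : ∀ {Z : Type u} [MeasurableSpace Z] {f : Z × X → ℝ≥0∞}, Measurable f →
    ∃ g : ℕ → Z × X → ℝ≥0∞, IsNormingFamily μ N N' f g

/-- `N` and `N'` are associate norms of each other. -/
structure IsAssocPair {X : Type u} [MeasurableSpace X] (μ : Measure X)
    (N N' : (X → ℝ≥0∞) → ℝ≥0∞) : Prop where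
  left : IsAssocNorm μ N N'
  right : IsAssocNorm μ N' N

section Truncation

theorem iSup_min_natCast (a : ℝ≥0∞) : ⨆ m : ℕ, min a m = a := by
  simpa [ENNReal.iSup_natCast] using (inf_iSup_eq a fun m : ℕ => (m : ℝ≥0∞)).symm

variable {X : Type*} [MeasurableSpace X] {μ : Measure X}

theorem lintegral_mul_eq_iSup_min {f g : X → ℝ≥0∞} (hf : Measurable f) (hg : Measurable g) :
    ∫⁻ x, f x * g x ∂μ = ⨆ m : ℕ, ∫⁻ x, f x * min (g x) m ∂μ := by
  rw [← lintegral_iSup (f := fun (m : ℕ) x => f x * min (g x) m)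
    (fun m => hf.mul (hg.min measurable_const))]
  · simp only [← ENNReal.mul_iSup, iSup_min_natCast]
  · intro m k hmk x
    dsimp only
    gcongr

end Truncation

theorem measurable_lintegral_mul_prodMk {Z X : Type*} [MeasurableSpace Z] [MeasurableSpace X]
    {μ : Measure X} [SFinite μ] {f g : Z × X → ℝ≥0∞} (hf : Measurable f) (hg : Measurable g) :
    Measurable fun z => ∫⁻ x, f (z, x) * g (z, x) ∂μ :=
  (hf.mul hg).lintegral_prod_right'

theorem exists_measurable_argmax {Z β : Type*} [MeasurableSpace Z] [LinearOrder β]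
    [TopologicalSpace β] [OrderClosedTopology β] [SecondCountableTopology β] [MeasurableSpace β]
    [BorelSpace β] {I : ℕ → Z → β} (hI : ∀ i, Measurable (I i)) (m : ℕ) :
    ∃ κ : Z → ℕ, Measurable κ ∧ ∀ z, I (κ z) z = partialSups (fun i => I i z) m := by
  classical
  have attained (z : Z) : ∃ i, I i z = partialSups (fun i => I i z) m :=
    let ⟨i, _, hi⟩ := exists_partialSups_eq (fun i => I i z) m
    ⟨i, hi.symm⟩
  have measurable_sup : Measurable fun z => partialSups (fun i => I i z) m := by
    simp only [partialSups_eq_sup'_range]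
    exact Finset.measurable_range_sup'' fun i _ => hI i
  exact ⟨fun z => Nat.find (attained z),
    measurable_find attained fun i => measurableSet_eq_fun (hI i) measurable_sup,
    fun z => Nat.find_spec (attained z)⟩

namespace IsNormingFamily

variable {ι Z X : Type*} [MeasurableSpace Z] [MeasurableSpace X] {μ : Measure X}
  {N N' : (X → ℝ≥0∞) → ℝ≥0∞} {f : Z × X → ℝ≥0∞}

theorem exists_nat [Countable ι] [Nonempty ι] {g : ι → Z × X → ℝ≥0∞}
    (hg : IsNormingFamily μ N N' f g) : ∃ g : ℕ → Z × X → ℝ≥0∞, IsNormingFamily μ N N' f g := by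
  obtain ⟨e, he⟩ := exists_surjective_nat ι
  refine ⟨fun m => g (e m), fun m => hg.measurable _, fun m => hg.dual_le_one _, fun z => ?_⟩
  rw [he.iSup_comp fun i => ∫⁻ x, f (z, x) * g i (z, x) ∂μ]
  exact hg.le_iSup z

-- Choosing, for each `z`, the best of the first `m` test functions makes the pairings increase.
theorem exists_monotone [SFinite μ] {g : ℕ → Z × X → ℝ≥0∞} (hf : Measurable f)
    (hg : IsNormingFamily μ N N' f g) :
    ∃ g : ℕ → Z × X → ℝ≥0∞, IsNormingFamily μ N N' f g ∧
      ∀ z, Monotone fun m => ∫⁻ x, f (z, x) * g m (z, x) ∂μ := by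
  choose κ hκ hmax using exists_measurable_argmax
    fun i => measurable_lintegral_mul_prodMk (μ := μ) hf (hg.measurable i)
  refine ⟨fun m w => g (κ m w.1) w, ⟨fun m => ?_, fun m z => hg.dual_le_one (κ m z) z, fun z => ?_⟩,
    fun z => ?_⟩
  · have measurable_uncurry : Measurable fun w : ℕ × (Z × X) => g w.1 w.2 :=
      measurable_from_prod_countable_right hg.measurable
    exact measurable_uncurry.comp (((hκ m).comp measurable_fst).prodMk measurable_id)
  · simp only [hmax, iSup_partialSups_eq]
    exact hg.le_iSup z
  · simp only [hmax]
    exact partialSups_monotone _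

end IsNormingFamily

namespace IsAssocNorm

variable {X : Type u} [MeasurableSpace X] {μ : Measure X} {N N' : (X → ℝ≥0∞) → ℝ≥0∞}

theorem lintegral_mul_le_of_dual_le_one (H : IsAssocNorm μ N N') {f g : X → ℝ≥0∞}
    (hf : Measurable f) (hg : Measurable g) (hg₁ : N' g ≤ 1) : ∫⁻ x, f x * g x ∂μ ≤ N f :=
  (H.lintegral_mul_le hf hg).trans (mul_le_of_le_one_right' hg₁)

theorem measurable [SFinite μ] (H : IsAssocNorm μ N N') {Z : Type u} [MeasurableSpace Z]
    {f : Z × X → ℝ≥0∞} (hf : Measurable f) : Measurable fun z => N fun x => f (z, x) := by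
  obtain ⟨g, hg⟩ := H.exists_norming hf
  have attained (z : Z) : N (fun x => f (z, x)) = ⨆ m, ∫⁻ x, f (z, x) * g m (z, x) ∂μ :=
    (hg.le_iSup z).antisymm <| iSup_le fun m => H.lintegral_mul_le_of_dual_le_one
      (hf.comp measurable_prodMk_left) ((hg.measurable m).comp measurable_prodMk_left)
      (hg.dual_le_one m z)
  simp only [attained]
  exact .iSup fun m => measurable_lintegral_mul_prodMk hf (hg.measurable m)

theorem eq_iSup_le_one (H : IsAssocNorm μ N N') {f : X → ℝ≥0∞} (hf : Measurable f) :
    N f = ⨆ (g : X → ℝ≥0∞) (_ : Measurable g) (_ : N' g ≤ 1), ∫⁻ x, f x * g x ∂μ := by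
  refine le_antisymm ?_ (iSup₂_le fun g hg => iSup_le fun hg₁ =>
    H.lintegral_mul_le_of_dual_le_one hf hg hg₁)
  obtain ⟨g, hg⟩ := H.exists_norming (Z := PUnit) (hf.comp measurable_snd)
  refine (hg.le_iSup ⟨⟩).trans (iSup_le fun m => ?_)
  exact le_iSup₂_of_le (fun x => g m (⟨⟩, x)) ((hg.measurable m).comp measurable_prodMk_left)
    (le_iSup_of_le (hg.dual_le_one m ⟨⟩) le_rfl)

theorem mono (H : IsAssocNorm μ N N') {f g : X → ℝ≥0∞} (hf : Measurable f) (hg : Measurable g)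
    (hfg : f ≤ g) : N f ≤ N g := by
  rw [H.eq_iSup_le_one hf, H.eq_iSup_le_one hg]
  gcongr
  exact hfg _

theorem const_mul (H : IsAssocNorm μ N N') (c : ℝ≥0∞) {f : X → ℝ≥0∞} (hf : Measurable f) :
    N (fun x => c * f x) = c * N f := by
  rw [H.eq_iSup_le_one hf, H.eq_iSup_le_one (hf.const_mul c)]
  simp only [ENNReal.mul_iSup, mul_assoc]
  refine iSup_congr fun g => iSup_congr fun hg => iSup_congr fun _ => ?_
  exact lintegral_const_mul c (hf.mul hg)

end IsAssocNorm

theorem IsAssocPair.symm {X : Type u} [MeasurableSpace X] {μ : Measure X}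
    {N N' : (X → ℝ≥0∞) → ℝ≥0∞} (H : IsAssocPair μ N N') : IsAssocPair μ N' N :=
  ⟨H.right, H.left⟩

theorem IsAssocPair.eq_iSup_eq_one {X : Type u} [MeasurableSpace X] {μ : Measure X}
    {N N' : (X → ℝ≥0∞) → ℝ≥0∞} (H : IsAssocPair μ N N') {f : X → ℝ≥0∞} (hf : Measurable f) :
    N f = ⨆ (g : X → ℝ≥0∞) (_ : Measurable g) (_ : ∀ x, g x ≠ ∞) (_ : N' g = 1),
      ∫⁻ x, f x * g x ∂μ := by
  set S := ⨆ (g : X → ℝ≥0∞) (_ : Measurable g) (_ : ∀ x, g x ≠ ∞) (_ : N' g = 1),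
    ∫⁻ x, f x * g x ∂μ
  have le_of_ne_top {g : X → ℝ≥0∞} (hg : Measurable g) (hg_top : ∀ x, g x ≠ ∞) (hg₁ : N' g ≤ 1) :
      ∫⁻ x, f x * g x ∂μ ≤ S := by
    by_cases hg₀ : N' g = 0
    · exact (H.left.lintegral_mul_le hf hg).trans (by simp [hg₀])
    have inv_ne_top : (N' g)⁻¹ ≠ ∞ := ENNReal.inv_ne_top.2 hg₀
    have normalized : N' (fun x => (N' g)⁻¹ * g x) = 1 := by
      rw [H.right.const_mul _ hg,
        ENNReal.inv_mul_cancel hg₀ (ne_top_of_le_ne_top ENNReal.one_ne_top hg₁)]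
    calc ∫⁻ x, f x * g x ∂μ
        ≤ ∫⁻ x, f x * ((N' g)⁻¹ * g x) ∂μ := by
          gcongr with x
          exact le_mul_of_one_le_left' (ENNReal.one_le_inv.2 hg₁)
      _ ≤ S := le_iSup₂_of_le _ (hg.const_mul _) <|
          le_iSup₂_of_le (fun x => ENNReal.mul_ne_top inv_ne_top (hg_top x)) normalized le_rfl
  apply le_antisymm
  · rw [H.left.eq_iSup_le_one hf]
    refine iSup₂_le fun g hg => iSup_le fun hg₁ => ?_
    rw [lintegral_mul_eq_iSup_min hf hg]
    refine iSup_le fun m => ?_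
    have hmin : Measurable fun x => min (g x) m := hg.min measurable_const
    exact le_of_ne_top hmin (fun x => by simp)
      ((H.right.mono hmin hg fun x => min_le_left _ _).trans hg₁)
  · exact iSup₂_le fun g hg => iSup₂_le fun _ hg₁ =>
      H.left.lintegral_mul_le_of_dual_le_one hf hg hg₁.le

section MixedNorm

variable {X Y : Type u} [MeasurableSpace X] [MeasurableSpace Y] {μ : Measure X} {ν : Measure Y}
  [SFinite ν] {N N' : (X → ℝ≥0∞) → ℝ≥0∞} {M M' : (Y → ℝ≥0∞) → ℝ≥0∞}

theorem IsNormingFamily.lintegral_outer_le {Z : Type*} [MeasurableSpace Z] {f : Z × X × Y → ℝ≥0∞}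
    {g : ℕ → (Z × X) × Y → ℝ≥0∞} {u : Z × X → ℝ≥0∞} (hf : Measurable f) (hu : Measurable u)
    (hg : IsNormingFamily ν M M' (fun w => f (w.1.1, w.1.2, w.2)) g)
    (hg_mono : ∀ w : Z × X, Monotone fun m => ∫⁻ y, f (w.1, w.2, y) * g m (w, y) ∂ν) (z : Z) :
    ∫⁻ x, M (fun y => f (z, x, y)) * u (z, x) ∂μ ≤
      ⨆ m, ∫⁻ w, f (z, w) * (u (z, w.1) * g m ((z, w.1), w.2)) ∂μ.prod ν := by
  have hslice (x : X) : Measurable fun y => f (z, x, y) := hf.comp (by fun_prop)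
  have hg_slice (m : ℕ) (x : X) : Measurable fun y => g m ((z, x), y) :=
    (hg.measurable m).comp measurable_prodMk_left
  have hpairing (m : ℕ) : Measurable fun x => ∫⁻ y, f (z, x, y) * g m ((z, x), y) ∂ν :=
    measurable_lintegral_mul_prodMk (f := fun w : X × Y => f (z, w))
      (g := fun w : X × Y => g m ((z, w.1), w.2)) (hf.comp (by fun_prop))
      ((hg.measurable m).comp (by fun_prop))
  calc ∫⁻ x, M (fun y => f (z, x, y)) * u (z, x) ∂μ
      ≤ ∫⁻ x, ⨆ m, (∫⁻ y, f (z, x, y) * g m ((z, x), y) ∂ν) * u (z, x) ∂μ := by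
        gcongr with x
        rw [← ENNReal.iSup_mul]
        gcongr
        exact hg.le_iSup (z, x)
    _ = ⨆ m, ∫⁻ x, (∫⁻ y, f (z, x, y) * g m ((z, x), y) ∂ν) * u (z, x) ∂μ :=
        lintegral_iSup (fun m => (hpairing m).mul (hu.comp measurable_prodMk_left))
          fun m k hmk x => mul_le_mul_left (hg_mono (z, x) hmk) _
    _ = ⨆ m, ∫⁻ w, f (z, w) * (u (z, w.1) * g m ((z, w.1), w.2)) ∂μ.prod ν := by
        refine iSup_congr fun m => ?_
        rw [lintegral_prod _ (by have := hg.measurable m; fun_prop)]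
        refine lintegral_congr fun x => ?_
        rw [← lintegral_mul_const _ (f := fun y => f (z, x, y) * g m ((z, x), y))
          ((hslice x).mul (hg_slice m x))]
        exact lintegral_congr fun y => by ring

theorem IsAssocNorm.prod (H : IsAssocPair μ N N') (K : IsAssocPair ν M M') :
    IsAssocNorm (μ.prod ν) (fun f => N fun x => M fun y => f (x, y))
      (fun f => N' fun x => M' fun y => f (x, y)) where
  lintegral_mul_le {f g} hf hg := calc
    ∫⁻ w, f w * g w ∂μ.prod ν = ∫⁻ x, ∫⁻ y, f (x, y) * g (x, y) ∂ν ∂μ :=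
        lintegral_prod _ (hf.mul hg).aemeasurable
    _ ≤ ∫⁻ x, M (fun y => f (x, y)) * M' (fun y => g (x, y)) ∂μ := by
        gcongr with x
        exact K.left.lintegral_mul_le (hf.comp measurable_prodMk_left)
          (hg.comp measurable_prodMk_left)
    _ ≤ _ := H.left.lintegral_mul_le (K.left.measurable hf) (K.right.measurable hg)
  exists_norming {Z _ f} hf := by
    have hf' : Measurable fun w : (Z × X) × Y => f (w.1.1, w.1.2, w.2) := hf.comp (by fun_prop)
    obtain ⟨g₀, hg₀⟩ := K.left.exists_norming hf'
    obtain ⟨g, hg, hg_mono⟩ := hg₀.exists_monotone hf'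
    obtain ⟨u, hu⟩ := H.left.exists_norming (K.left.measurable hf')
    refine IsNormingFamily.exists_nat (ι := ℕ × ℕ)
      (g := fun i w => u i.1 (w.1, w.2.1) * g i.2 ((w.1, w.2.1), w.2.2))
      ⟨fun i => ?_, fun i z => ?_, fun z => ?_⟩
    · exact ((hu.measurable i.1).comp (by fun_prop)).mul ((hg.measurable i.2).comp (by fun_prop))
    · have hg_slice (x : X) : Measurable fun y => g i.2 ((z, x), y) :=
        (hg.measurable i.2).comp measurable_prodMk_left
      have hu_slice : Measurable fun x => u i.1 (z, x) :=
        (hu.measurable i.1).comp measurable_prodMk_left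
      simp only [K.right.const_mul _ (hg_slice _)]
      refine le_trans ?_ (hu.dual_le_one i.1 z)
      refine H.right.mono (hu_slice.mul ?_) hu_slice
        fun x => mul_le_of_le_one_right' (hg.dual_le_one i.2 (z, x))
      exact (K.right.measurable (hg.measurable i.2)).comp measurable_prodMk_left
    · rw [iSup_prod]
      refine (hu.le_iSup z).trans (iSup_mono fun l => ?_)
      exact hg.lintegral_outer_le hf (hu.measurable l) hg_mono z

theorem IsAssocPair.prod (H : IsAssocPair μ N N') (K : IsAssocPair ν M M') :
    IsAssocPair (μ.prod ν) (fun f => N fun x => M fun y => f (x, y))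
      (fun f => N' fun x => M' fun y => f (x, y)) :=
  ⟨.prod H K, .prod H.symm K.symm⟩

end MixedNorm

section Weight

variable {X : Type u} [MeasurableSpace X] {μ : Measure X} {N N' : (X → ℝ≥0∞) → ℝ≥0∞}
  {w w' : X → ℝ≥0∞}

theorem IsAssocNorm.weight (H : IsAssocNorm μ N N') (hw : Measurable w) (hw' : Measurable w')
    (hww' : ∀ x, w x * w' x = 1) :
    IsAssocNorm μ (fun f => N fun x => w x * f x) (fun f => N' fun x => w' x * f x) where
  lintegral_mul_le {f g} hf hg := by
    simpa only [mul_mul_mul_comm, hww', one_mul] using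
      H.lintegral_mul_le (f := fun x => w x * f x) (g := fun x => w' x * g x)
        (hw.mul hf) (hw'.mul hg)
  exists_norming {Z _ f} hf := by
    have hwsnd : Measurable fun y : Z × X => w y.2 := hw.comp measurable_snd
    obtain ⟨g, hg⟩ := H.exists_norming (f := fun y => w y.2 * f y) (hwsnd.mul hf)
    refine ⟨fun m y => w y.2 * g m y, fun m => hwsnd.mul (hg.measurable m), fun m z => ?_,
      fun z => ?_⟩
    · have cancel (x : X) : w' x * (w x * g m (z, x)) = g m (z, x) := by
        rw [← mul_assoc, mul_comm (w' x), hww', one_mul]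
      simpa only [cancel] using hg.dual_le_one m z
    · simpa only [mul_assoc, mul_left_comm (w _)] using hg.le_iSup z

theorem IsAssocPair.weight (H : IsAssocPair μ N N') (hw : Measurable w) (hw' : Measurable w')
    (hww' : ∀ x, w x * w' x = 1) :
    IsAssocPair μ (fun f => N fun x => w x * f x) (fun f => N' fun x => w' x * f x) :=
  ⟨H.left.weight hw hw' hww', H.right.weight hw' hw fun x => (mul_comm _ _).trans (hww' x)⟩

end Weight

section Comap

theorem lintegral_extend_mul {Y X : Type*} [MeasurableSpace Y] [MeasurableSpace X] {μ : Measure X}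
    {φ : Y → X} (hφ : MeasurableEmbedding φ) (f : Y → ℝ≥0∞) (g : X → ℝ≥0∞) :
    ∫⁻ x, Function.extend φ f 0 x * g x ∂μ = ∫⁻ y, f y * g (φ y) ∂μ.comap φ := by
  have support_subset :
      (Function.support fun x => Function.extend φ f 0 x * g x) ⊆ Set.range φ := by
    intro x hx
    by_contra hxφ
    have extend_eq_zero : Function.extend φ f 0 x = 0 := Function.extend_apply' _ _ _ hxφ
    exact hx (by simp only [extend_eq_zero, zero_mul])
  rw [← Set.indicator_eq_self.2 support_subset, lintegral_indicator hφ.measurableSet_range,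
    ← hφ.map_comap, hφ.lintegral_map]
  simp only [hφ.injective.extend_apply]

theorem extend_prodMap_id_left {Z Y X : Type*} {φ : Y → X} (hφ : Function.Injective φ)
    (f : Z × Y → ℝ≥0∞) (z : Z) (x : X) :
    Function.extend (Prod.map id φ) f 0 (z, x) = Function.extend φ (fun y => f (z, y)) 0 x := by
  have hinj : Function.Injective (Prod.map (@id Z) φ) := Function.injective_id.prodMap hφ
  by_cases hx : ∃ y, φ y = x
  · obtain ⟨y, rfl⟩ := hx
    exact (hinj.extend_apply f 0 (z, y)).trans (hφ.extend_apply (fun y => f (z, y)) 0 y).symm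
  · rw [Function.extend_apply' _ _ _ hx, Function.extend_apply']
    · rfl
    · rintro ⟨⟨_, y⟩, hy⟩
      exact hx ⟨y, congrArg Prod.snd hy⟩

theorem extend_comp_le {Y X : Type*} {φ : Y → X} (hφ : Function.Injective φ) (g : X → ℝ≥0∞) :
    Function.extend φ (fun y => g (φ y)) 0 ≤ g := by
  intro x
  by_cases hx : ∃ y, φ y = x
  · obtain ⟨y, rfl⟩ := hx
    rw [hφ.extend_apply]
  · simp [Function.extend_apply' _ _ _ hx]

variable {X Y : Type u} [MeasurableSpace X] [MeasurableSpace Y] {μ : Measure X}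
  {N N' : (X → ℝ≥0∞) → ℝ≥0∞} {φ : Y → X}

theorem IsAssocNorm.comap (H : IsAssocPair μ N N') (hφ : MeasurableEmbedding φ) :
    IsAssocNorm (μ.comap φ) (fun f => N (Function.extend φ f 0))
      (fun f => N' (Function.extend φ f 0)) where
  lintegral_mul_le {f g} hf hg := by
    simpa only [lintegral_extend_mul hφ, hφ.injective.extend_apply] using
      H.left.lintegral_mul_le (hφ.measurable_extend hf measurable_zero)
        (hφ.measurable_extend hg measurable_zero)
  exists_norming {Z _ f} hf := by
    obtain ⟨g, hg⟩ := H.left.exists_norming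
      ((MeasurableEmbedding.id.prodMap hφ).measurable_extend hf measurable_zero)
    have hg_comp (m : ℕ) : Measurable fun w : Z × Y => g m (w.1, φ w.2) :=
      (hg.measurable m).comp (by have := hφ.measurable; fun_prop)
    refine ⟨fun m w => g m (w.1, φ w.2), hg_comp, fun m z => ?_, fun z => ?_⟩
    · have hg_slice : Measurable fun x => g m (z, x) :=
        (hg.measurable m).comp measurable_prodMk_left
      exact (H.right.mono
        (hφ.measurable_extend ((hg_comp m).comp measurable_prodMk_left) measurable_zero) hg_slice
        (extend_comp_le hφ.injective _)).trans (hg.dual_le_one m z)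
    · have := hg.le_iSup z
      simp only [extend_prodMap_id_left hφ.injective, lintegral_extend_mul hφ] at this
      exact this

theorem IsAssocPair.comap (H : IsAssocPair μ N N') (hφ : MeasurableEmbedding φ) :
    IsAssocPair (μ.comap φ) (fun f => N (Function.extend φ f 0))
      (fun f => N' (Function.extend φ f 0)) :=
  ⟨.comap H hφ, .comap H.symm hφ⟩

end Comap

theorem isAssocPair_dirac {X : Type u} [MeasurableSpace X] (a : X) :
    IsAssocPair (Measure.dirac a) (fun f => f a) (fun f => f a) := by
  suffices IsAssocNorm (Measure.dirac a) (fun f => f a) (fun f => f a) from ⟨this, this⟩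
  refine ⟨fun hf hg => (lintegral_dirac' a (hf.mul hg)).le, fun {Z _ f} hf => ?_⟩
  refine ⟨fun _ _ => 1, fun _ => measurable_const, fun _ _ => le_rfl, fun z => ?_⟩
  have hslice : Measurable fun x => f (z, x) := hf.comp measurable_prodMk_left
  simp [lintegral_dirac' a hslice]

section Lp

variable {X : Type*} [MeasurableSpace X] {μ : Measure X} {q q' : ℝ≥0∞}

theorem lintegral_mul_le_lintegral_mul_essSup {f : X → ℝ≥0∞} (hf : Measurable f)
    (g : X → ℝ≥0∞) : ∫⁻ x, f x * g x ∂μ ≤ (∫⁻ x, f x ∂μ) * essSup g μ := by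
  rw [← lintegral_mul_const _ hf]
  refine lintegral_mono_ae ?_
  filter_upwards [ENNReal.ae_le_essSup g] with x hx
  gcongr

theorem lintegral_mul_le_eLpNorm_mul_eLpNorm [q.HolderConjugate q'] {f g : X → ℝ≥0∞}
    (hf : Measurable f) (hg : Measurable g) :
    ∫⁻ x, f x * g x ∂μ ≤ eLpNorm f q μ * eLpNorm g q' μ := by
  rcases eq_or_ne q ∞ with rfl | hq
  · obtain rfl : q' = 1 := (HolderConjugate.eq_top_iff_eq_one ∞ q').1 rfl
    rw [mul_comm]
    simp only [mul_comm (f _)]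
    simpa [eLpNorm_one_eq_lintegral_enorm, eLpNormEssSup_eq_essSup_enorm] using
      lintegral_mul_le_lintegral_mul_essSup hg f
  rcases eq_or_ne q' ∞ with rfl | hq'
  · obtain rfl : q = 1 := (HolderConjugate.eq_top_iff_eq_one ∞ q).1 rfl
    simpa [eLpNorm_one_eq_lintegral_enorm, eLpNormEssSup_eq_essSup_enorm] using
      lintegral_mul_le_lintegral_mul_essSup hf g
  rw [eLpNorm_eq_lintegral_rpow_enorm_toReal (HolderConjugate.ne_zero q q') hq,
    eLpNorm_eq_lintegral_rpow_enorm_toReal (HolderConjugate.ne_zero q' q) hq']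
  exact ENNReal.lintegral_mul_le_Lp_mul_Lq μ (HolderConjugate.toReal_of_ne_top hq hq')
    hf.aemeasurable hg.aemeasurable

theorem lintegral_indicator_inv_measure_le_one {s : Set X} (hs : MeasurableSet s) :
    ∫⁻ x, s.indicator (fun _ => (μ s)⁻¹) x ∂μ ≤ 1 := by
  rw [lintegral_indicator_const hs]
  exact ENNReal.inv_mul_le_one _

theorem le_lintegral_mul_indicator_inv_measure {f : X → ℝ≥0∞} {s : Set X} {t : ℝ≥0∞}
    (hs : MeasurableSet s) (hs₀ : μ s ≠ 0) (hs_top : μ s ≠ ∞) (ht : ∀ x ∈ s, t ≤ f x) :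
    t ≤ ∫⁻ x, f x * s.indicator (fun _ => (μ s)⁻¹) x ∂μ := calc
  t = ∫⁻ x, s.indicator (fun _ => t * (μ s)⁻¹) x ∂μ := by
      rw [lintegral_indicator_const hs, mul_assoc, ENNReal.inv_mul_cancel hs₀ hs_top, mul_one]
  _ ≤ ∫⁻ x, f x * s.indicator (fun _ => (μ s)⁻¹) x ∂μ := by
      gcongr with x
      refine Set.indicator_apply_le' (fun hx => ?_) fun _ => zero_le
      rw [Set.indicator_of_mem hx]
      gcongr
      exact ht x hx

theorem exists_measure_superlevel_inter_spanningSets_pos [SigmaFinite μ] {f : X → ℝ≥0∞}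
    {t : ℝ≥0∞} (ht : t < essSup f μ) : ∃ j, 0 < μ ({x | t < f x} ∩ spanningSets μ j) := by
  refine (Measure.exists_measure_inter_spanningSets_pos _).2 (pos_iff_ne_zero.2 fun h₀ => ?_)
  refine ht.not_ge (essSup_le_of_ae_le t ?_)
  simpa [Filter.EventuallyLE, ae_iff] using h₀

theorem exists_isNormingFamily_eLpNorm_top [SigmaFinite μ] {Z : Type*} [MeasurableSpace Z]
    {f : Z × X → ℝ≥0∞} (hf : Measurable f) :
    ∃ g : ℕ → Z × X → ℝ≥0∞,
      IsNormingFamily μ (fun f => eLpNorm f ∞ μ) (fun f => eLpNorm f 1 μ) f g := by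
  let A (i : ℚ × ℕ) : Set (Z × X) :=
    {w | ENNReal.ofReal i.1 < f w} ∩ Prod.snd ⁻¹' spanningSets μ i.2
  have hA (i) : MeasurableSet (A i) := (measurableSet_lt measurable_const hf).inter
    (measurable_snd (measurableSet_spanningSets μ i.2))
  have hA_slice (i) (z : Z) : MeasurableSet (Prod.mk z ⁻¹' A i) := measurable_prodMk_left (hA i)
  have hA_top (i) (z : Z) : μ (Prod.mk z ⁻¹' A i) ≠ ∞ :=
    measure_ne_top_of_subset (fun x hx => hx.2) (measure_spanningSets_lt_top μ i.2).ne
  refine IsNormingFamily.exists_nat (ι := ℚ × ℕ)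
    (g := fun i w => (Prod.mk w.1 ⁻¹' A i).indicator (fun _ => (μ (Prod.mk w.1 ⁻¹' A i))⁻¹) w.2)
    ⟨fun i => ?_, fun i z => ?_, fun z => ?_⟩
  · exact ((measurable_measure_prodMk_left (hA i)).comp measurable_fst).inv.indicator (hA i)
  · simpa [eLpNorm_one_eq_lintegral_enorm] using
      lintegral_indicator_inv_measure_le_one (hA_slice i z)
  · simp only [eLpNorm_exponent_top, eLpNormEssSup_eq_essSup_enorm, enorm_eq_self]
    refine le_of_forall_lt fun c hc => ?_
    obtain ⟨t, -, hct, ht⟩ := ENNReal.lt_iff_exists_rat_btwn.1 hc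
    obtain ⟨j, hj⟩ := exists_measure_superlevel_inter_spanningSets_pos ht
    refine hct.trans_le (le_iSup_of_le (t, j) ?_)
    exact le_lintegral_mul_indicator_inv_measure (hA_slice _ z) hj.ne' (hA_top _ z)
      fun x hx => hx.1.le

/-- The truncation of `f` at height `m`, supported on `spanningSets μ m`. These bounded functions
with support of finite measure increase to `f`. -/
def spanningTruncation (μ : Measure X) [SigmaFinite μ] (f : X → ℝ≥0∞) (m : ℕ) : X → ℝ≥0∞ :=
  (spanningSets μ m).indicator fun x => min (f x) m

section SpanningTruncation

variable [SigmaFinite μ]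

theorem spanningTruncation_le (f : X → ℝ≥0∞) (m : ℕ) : spanningTruncation μ f m ≤ f := fun x =>
  (Set.indicator_le_self _ _ x).trans (min_le_left _ _)

theorem spanningTruncation_mono (f : X → ℝ≥0∞) : Monotone (spanningTruncation μ f) :=
  fun m k hmk => (Set.indicator_mono fun x => by gcongr).trans
    (Set.indicator_le_indicator_of_subset (monotone_spanningSets μ hmk) fun _ => zero_le)

theorem iSup_spanningTruncation (f : X → ℝ≥0∞) (x : X) :
    ⨆ m, spanningTruncation μ f m x = f x := by
  refine le_antisymm (iSup_le fun m => spanningTruncation_le f m x) ?_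
  rw [← iSup_min_natCast (f x)]
  refine iSup_le fun m => le_iSup_of_le (max m (spanningSetsIndex μ x)) ?_
  rw [spanningTruncation, Set.indicator_of_mem
    (monotone_spanningSets μ (le_max_right _ _) (mem_spanningSetsIndex μ x))]
  gcongr
  exact le_max_left _ _

theorem measurable_spanningTruncation_prod {Z : Type*} [MeasurableSpace Z] {f : Z × X → ℝ≥0∞}
    (hf : Measurable f) (m : ℕ) :
    Measurable fun w : Z × X => spanningTruncation μ (fun x => f (w.1, x)) m w.2 :=
  (hf.min measurable_const).indicator (measurable_snd (measurableSet_spanningSets μ m))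

theorem lintegral_spanningTruncation_rpow_ne_top {a : ℝ} (ha : 0 < a) (f : X → ℝ≥0∞) (m : ℕ) :
    ∫⁻ x, spanningTruncation μ f m x ^ a ∂μ ≠ ∞ := by
  have bound (x : X) : spanningTruncation μ f m x ^ a ≤
      (spanningSets μ m).indicator (fun _ => (m : ℝ≥0∞) ^ a) x := by
    by_cases hx : x ∈ spanningSets μ m
    · rw [spanningTruncation, Set.indicator_of_mem hx, Set.indicator_of_mem hx]
      exact ENNReal.rpow_le_rpow (min_le_right _ _) ha.le
    · simp [spanningTruncation, hx, ha]
  refine ne_top_of_le_ne_top ?_ (lintegral_mono bound)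
  rw [lintegral_indicator_const (measurableSet_spanningSets μ m)]
  exact ENNReal.mul_ne_top (ENNReal.rpow_ne_top_of_nonneg ha.le (ENNReal.natCast_ne_top m))
    (measure_spanningSets_lt_top μ m).ne

theorem lintegral_rpow_eq_iSup_spanningTruncation {a : ℝ} (ha : 0 < a) {f : X → ℝ≥0∞}
    (hf : Measurable f) :
    ∫⁻ x, f x ^ a ∂μ = ⨆ m, ∫⁻ x, spanningTruncation μ f m x ^ a ∂μ := by
  rw [← lintegral_iSup (f := fun m x => spanningTruncation μ f m x ^ a)]
  · refine lintegral_congr fun x => ?_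
    rw [← iSup_spanningTruncation (μ := μ) f x]
    exact (ENNReal.orderIsoRpow a ha).map_iSup _
  · exact fun m => ((hf.min measurable_const).indicator
      (measurableSet_spanningSets μ m)).pow_const a
  · exact fun m k hmk x => ENNReal.rpow_le_rpow (spanningTruncation_mono f hmk x) ha.le

end SpanningTruncation

/-- The normalized function for which Hölder's inequality with exponents `a` and `b` is an equality
against `h`. The junk value `0⁻¹ = ∞` when `h = 0` a.e. is harmless, since `∞ * 0 = 0`. -/
def holderExtremizer (μ : Measure X) (a b : ℝ) (h : X → ℝ≥0∞) (x : X) : ℝ≥0∞ :=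
  ((∫⁻ y, h y ^ a ∂μ)⁻¹ * h x ^ a) ^ (1 / b)

theorem lintegral_holderExtremizer_rpow_le_one {a b : ℝ} (hb : b ≠ 0) {h : X → ℝ≥0∞}
    (hh : Measurable h) : ∫⁻ x, holderExtremizer μ a b h x ^ b ∂μ ≤ 1 := by
  simp only [holderExtremizer, one_div, ENNReal.rpow_inv_rpow hb]
  rw [lintegral_const_mul _ (hh.pow_const a)]
  exact ENNReal.inv_mul_le_one _

theorem lintegral_rpow_le_lintegral_mul_holderExtremizer {a b : ℝ} (hab : a.HolderConjugate b)
    {h : X → ℝ≥0∞} (hh : Measurable h) (hh_top : ∫⁻ x, h x ^ a ∂μ ≠ ∞) :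
    (∫⁻ x, h x ^ a ∂μ) ^ (1 / a) ≤ ∫⁻ x, h x * holderExtremizer μ a b h x ∂μ := by
  set A := ∫⁻ x, h x ^ a ∂μ with hA
  by_cases hA₀ : A = 0
  · simp [hA₀, hab.pos]
  have cancel : A⁻¹ * A = 1 := ENNReal.inv_mul_cancel hA₀ hh_top
  have integrand (x : X) : h x * holderExtremizer μ a b h x = A ^ (1 / a) * (A⁻¹ * h x ^ a) := by
    have factor : h x = A ^ (1 / a) * (A⁻¹ * h x ^ a) ^ (1 / a) := by
      rw [← ENNReal.mul_rpow_of_nonneg _ _ hab.one_div_nonneg, ← mul_assoc, mul_comm A, cancel,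
        one_mul, one_div, ENNReal.rpow_rpow_inv hab.ne_zero]
    conv_lhs => rw [factor]
    rw [holderExtremizer, ← hA, mul_assoc, ← ENNReal.rpow_add_of_nonneg _ _ hab.one_div_nonneg
      hab.symm.one_div_nonneg, hab.one_div_add_one_div, div_one, ENNReal.rpow_one]
  simp only [integrand]
  rw [lintegral_const_mul _ ((hh.pow_const a).const_mul _), lintegral_const_mul _ (hh.pow_const a),
    ← hA, cancel, mul_one]

theorem exists_isNormingFamily_eLpNorm_of_ne_top [SigmaFinite μ] [q.HolderConjugate q']
    (hq : q ≠ ∞) (hq' : q' ≠ ∞) {Z : Type*} [MeasurableSpace Z] {f : Z × X → ℝ≥0∞}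
    (hf : Measurable f) :
    ∃ g : ℕ → Z × X → ℝ≥0∞,
      IsNormingFamily μ (fun f => eLpNorm f q μ) (fun f => eLpNorm f q' μ) f g := by
  set a := q.toReal
  set b := q'.toReal
  have hab : a.HolderConjugate b := HolderConjugate.toReal_of_ne_top hq hq'
  let h (m : ℕ) (z : Z) : X → ℝ≥0∞ := spanningTruncation μ (fun x => f (z, x)) m
  have hh (m) : Measurable fun w : Z × X => h m w.1 w.2 := measurable_spanningTruncation_prod hf m
  have hh_slice (m) (z : Z) : Measurable (h m z) := (hh m).comp measurable_prodMk_left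
  refine ⟨fun m w => holderExtremizer μ a b (h m w.1) w.2, fun m => ?_, fun m z => ?_, fun z => ?_⟩
  · have hA : Measurable fun w : Z × X => ∫⁻ x, h m w.1 x ^ a ∂μ :=
      (((hh m).pow_const a).lintegral_prod_right' (ν := μ)).comp measurable_fst
    exact (hA.inv.mul ((hh m).pow_const a)).pow_const _
  · rw [eLpNorm_eq_lintegral_rpow_enorm_toReal (HolderConjugate.ne_zero q' q) hq']
    simp only [enorm_eq_self]
    exact ENNReal.rpow_le_one
      (lintegral_holderExtremizer_rpow_le_one hab.symm.ne_zero (hh_slice m z))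
      hab.symm.one_div_nonneg
  · rw [eLpNorm_eq_lintegral_rpow_enorm_toReal (HolderConjugate.ne_zero q q') hq]
    have hf_slice : Measurable fun x => f (z, x) := hf.comp measurable_prodMk_left
    simp only [enorm_eq_self]
    rw [lintegral_rpow_eq_iSup_spanningTruncation hab.pos hf_slice]
    refine ((ENNReal.orderIsoRpow (1 / a) hab.one_div_pos).map_iSup _).trans_le
      (iSup_mono fun m => ?_)
    refine (lintegral_rpow_le_lintegral_mul_holderExtremizer hab (hh_slice m z)
      (lintegral_spanningTruncation_rpow_ne_top hab.pos _ m)).trans ?_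
    gcongr with x
    exact spanningTruncation_le _ m x

end Lp

theorem isAssocNorm_eLpNorm {X : Type u} [MeasurableSpace X] {μ : Measure X} [SigmaFinite μ]
    {q q' : ℝ≥0∞} [q.HolderConjugate q'] :
    IsAssocNorm μ (fun f => eLpNorm f q μ) (fun f => eLpNorm f q' μ) where
  lintegral_mul_le hf hg := lintegral_mul_le_eLpNorm_mul_eLpNorm hf hg
  exists_norming {Z _ f} hf := by
    rcases eq_or_ne q ∞ with rfl | hq
    · obtain rfl : q' = 1 := (HolderConjugate.eq_top_iff_eq_one ∞ q').1 rfl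
      exact exists_isNormingFamily_eLpNorm_top hf
    rcases eq_or_ne q' ∞ with rfl | hq'
    · obtain rfl : q = 1 := (HolderConjugate.eq_top_iff_eq_one ∞ q).1 rfl
      refine ⟨fun _ _ => 1, fun _ => measurable_const, fun _ _ => ?_, fun z => ?_⟩
      · simpa [eLpNormEssSup_eq_essSup_enorm] using
          essSup_le_of_ae_le 1 (ae_of_all μ fun _ => le_rfl)
      · simp [eLpNorm_one_eq_lintegral_enorm]
    exact exists_isNormingFamily_eLpNorm_of_ne_top hq hq' hf

theorem isAssocPair_eLpNorm {X : Type u} [MeasurableSpace X] {μ : Measure X} [SigmaFinite μ]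
    {q q' : ℝ≥0∞} [q.HolderConjugate q'] :
    IsAssocPair μ (fun f => eLpNorm f q μ) (fun f => eLpNorm f q' μ) :=
  ⟨isAssocNorm_eLpNorm, isAssocNorm_eLpNorm⟩

section Fibers

variable {ι Y : Type*}

theorem extend_graph (κ : Y → ι) (f : Y → ℝ≥0∞) (k : ι) (y : Y) :
    Function.extend (fun y => (κ y, y)) f 0 (k, y) = (κ ⁻¹' {k}).indicator f y := by
  have graph_injective : Function.Injective fun y => (κ y, y) := fun _ _ h => congrArg Prod.snd h
  by_cases hy : κ y = k
  · subst hy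
    simpa using graph_injective.extend_apply f 0 y
  · rw [Function.extend_apply' _ _ _ (by simpa using hy),
      Set.indicator_of_notMem (s := κ ⁻¹' {k}) hy]
    rfl

variable [MeasurableSpace ι] [Countable ι] [MeasurableSingletonClass ι] [MeasurableSpace Y]
  {κ : Y → ι}

theorem measurableEmbedding_graph (hκ : Measurable κ) :
    MeasurableEmbedding fun y => (κ y, y) := by
  refine .of_measurable_inverse (hκ.prodMk measurable_id) ?_ measurable_snd fun _ => rfl
  have range_eq : Set.range (fun y => (κ y, y)) = {w | κ w.2 = w.1} := by
    ext ⟨k, y⟩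
    simp [eq_comm]
  rw [range_eq]
  exact measurableSet_eq_fun (hκ.comp measurable_snd) measurable_fst

theorem comap_graph_count_prod (hκ : Measurable κ) (ν : Measure Y) [SFinite ν] :
    (Measure.count.prod ν).comap (fun y => (κ y, y)) = ν := by
  have hφ := measurableEmbedding_graph hκ
  ext s hs
  have fiber (y : Y) : Measure.count ((fun k => (k, y)) ⁻¹' ((fun y => (κ y, y)) '' s)) =
      s.indicator 1 y := by
    by_cases hy : y ∈ s
    · have : (fun k => (k, y)) ⁻¹' ((fun y => (κ y, y)) '' s) = {κ y} := by
        ext k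
        simp [hy, eq_comm]
      simp [this, hy]
    · have : (fun k => (k, y)) ⁻¹' ((fun y => (κ y, y)) '' s) = ∅ := by
        ext k
        simp [hy]
      simp [this, hy]
  rw [hφ.comap_apply, Measure.prod_apply_symm (hφ.measurableSet_image.2 hs)]
  simp only [fiber]
  exact lintegral_indicator_one hs

end Fibers

theorem IsAssocPair.fibers {ι Y : Type u} [Countable ι] [MeasurableSpace ι]
    [MeasurableSingletonClass ι] [MeasurableSpace Y] {ν : Measure Y} [SFinite ν]
    {L L' : (ι → ℝ≥0∞) → ℝ≥0∞} {M M' : (Y → ℝ≥0∞) → ℝ≥0∞} {κ : Y → ι} (hκ : Measurable κ)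
    (H : IsAssocPair Measure.count L L') (K : IsAssocPair ν M M') :
    IsAssocPair ν (fun f => L fun k => M ((κ ⁻¹' {k}).indicator f))
      (fun f => L' fun k => M' ((κ ⁻¹' {k}).indicator f)) := by
  simpa only [extend_graph, comap_graph_count_prod hκ] using
    (H.prod K).comap (measurableEmbedding_graph hκ)

section Herz

variable {p p' q q' : ℝ≥0∞}

theorem lpZNorm_eq_eLpNorm_count (hp : p ≠ 0) (a : ℤ → ℝ≥0∞) :
    lpZNorm p a = eLpNorm a p Measure.count := by
  by_cases hp_top : p = ∞
  · simp [lpZNorm, hp_top]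
  · simp [lpZNorm, hp_top, eLpNorm_eq_lintegral_rpow_enorm_toReal hp hp_top, lintegral_count]

theorem lqNormOn_eq_eLpNorm_indicator (hq : q ≠ 0) {s : Set ℝ} (hs : MeasurableSet s)
    (g : ℝ → ℝ≥0∞) : lqNormOn q s g = eLpNorm (s.indicator g) q volume := by
  rw [eLpNorm_indicator_eq_eLpNorm_restrict hs]
  by_cases hq_top : q = ∞
  · simp [lqNormOn, hq_top, eLpNormEssSup_eq_essSup_enorm,
      ← ENNReal.essSup_indicator_eq_essSup_restrict hs]
  · simp [lqNormOn, hq_top, eLpNorm_eq_lintegral_rpow_enorm_toReal hq hq_top]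

theorem isAssocPair_lpZNorm [p.HolderConjugate p'] :
    IsAssocPair Measure.count (lpZNorm p) (lpZNorm p') := by
  simpa only [← lpZNorm_eq_eLpNorm_count (HolderConjugate.ne_zero p p'),
    ← lpZNorm_eq_eLpNorm_count (HolderConjugate.ne_zero p' p)] using
    isAssocPair_eLpNorm (μ := (Measure.count : Measure ℤ)) (q := p) (q' := p')

/-- The index of the dyadic annulus `herzRing k` containing a real number `x ≠ 0`. Since `0` lies
in no annulus, the value there is irrelevant. -/
def herzIndex (x : ℝ) : ℤ := Int.log 2 |x| + 1

theorem measurable_herzIndex : Measurable herzIndex := by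
  have eq_floor (x : ℝ) : herzIndex x = ⌊Real.logb 2 x⌋ + 1 := by
    rw [herzIndex, ← Real.floor_logb_natCast (abs_nonneg x), Nat.cast_ofNat, Real.logb_abs]
  simp only [funext eq_floor, Real.logb]
  fun_prop

theorem mem_herzRing_iff {x : ℝ} (hx : x ≠ 0) {k : ℤ} : x ∈ herzRing k ↔ herzIndex x = k := by
  have abs_x_pos : 0 < |x| := abs_pos.2 hx
  rw [herzRing, Set.mem_sdiff, Set.mem_Ioo, Set.mem_Ioo, ← abs_lt, ← abs_lt, not_lt]
  have lower := Int.zpow_le_iff_le_log (b := 2) (x := k - 1) one_lt_two abs_x_pos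
  have upper := Int.lt_zpow_iff_log_lt (b := 2) (x := k) one_lt_two abs_x_pos
  rw [Nat.cast_ofNat] at lower upper
  rw [lower, upper, herzIndex]
  lia

theorem measurableSet_herzRing (k : ℤ) : MeasurableSet (herzRing k) :=
  measurableSet_Ioo.diff measurableSet_Ioo

theorem herzRing_ae_eq_preimage (k : ℤ) : herzRing k =ᵐ[volume] herzIndex ⁻¹' {k} := by
  filter_upwards [compl_mem_ae_iff.2 (measure_singleton (0 : ℝ))] with x hx
  exact propext (mem_herzRing_iff hx)

theorem herzNorm1_eq_lpZNorm_eLpNorm (α : ℝ) (p : ℝ≥0∞) (hq : q ≠ 0) (f : ℝ → ℝ≥0∞) :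
    herzNorm1 α p q f = lpZNorm p fun k => ENNReal.ofReal (2 ^ (k * α)) *
      eLpNorm ((herzIndex ⁻¹' {k}).indicator f) q volume := by
  unfold herzNorm1
  congr! 3 with k
  rw [lqNormOn_eq_eLpNorm_indicator hq (measurableSet_herzRing k)]
  exact eLpNorm_congr_ae (indicator_ae_eq_of_ae_eq_set (herzRing_ae_eq_preimage k))

theorem isAssocPair_herzNorm1 (α : ℝ) [p.HolderConjugate p'] [q.HolderConjugate q'] :
    IsAssocPair volume (herzNorm1 α p q) (herzNorm1 (-α) p' q') := by
  have weight_mul (k : ℤ) :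
      ENNReal.ofReal (2 ^ (k * α)) * ENNReal.ofReal (2 ^ (k * -α)) = 1 := by
    rw [← ENNReal.ofReal_mul (by positivity), ← Real.rpow_add two_pos, mul_neg, add_neg_cancel,
      Real.rpow_zero, ENNReal.ofReal_one]
  have fibers := ((isAssocPair_lpZNorm (p := p) (p' := p')).weight (.of_discrete) (.of_discrete)
    weight_mul).fibers measurable_herzIndex (isAssocPair_eLpNorm (μ := volume) (q := q) (q' := q'))
  simpa only [← herzNorm1_eq_lpZNorm_eLpNorm _ _ (HolderConjugate.ne_zero q q'),
    ← herzNorm1_eq_lpZNorm_eLpNorm _ _ (HolderConjugate.ne_zero q' q)] using fibers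

theorem isAssocPair_mixedHerzNormE (n : ℕ) (α : Fin n → ℝ) (p q p' q' : Fin n → ℝ≥0∞)
    (hp : ∀ i, (p i).HolderConjugate (p' i)) (hq : ∀ i, (q i).HolderConjugate (q' i)) :
    IsAssocPair volume (mixedHerzNormE n α p q) (mixedHerzNormE n (-α) p' q') := by
  induction n with
  | zero =>
    rw [volume_pi, Measure.pi_of_empty _ fun i => i.elim0]
    exact isAssocPair_dirac _
  | succ n ih =>
    let e := MeasurableEquiv.piFinSuccAbove (fun _ => ℝ) (Fin.last n)
    have := hp (Fin.last n)
    have := hq (Fin.last n)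
    have outer : IsAssocPair volume
        (herzNorm1 (α (Fin.last n)) (p (Fin.last n)) (q (Fin.last n)))
        (herzNorm1 (-α (Fin.last n)) (p' (Fin.last n)) (q' (Fin.last n))) :=
      isAssocPair_herzNorm1 _
    have inner := ih (Fin.init α) (Fin.init p) (Fin.init q) (Fin.init p') (Fin.init q')
      (fun i => hp i.castSucc) (fun i => hq i.castSucc)
    have extend_snoc (f : (Fin (n + 1) → ℝ) → ℝ≥0∞) (x : ℝ) (y : Fin n → ℝ) :
        Function.extend e f 0 (x, y) = f (Fin.snoc y x) := by
      rw [← Fin.insertNth_last']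
      exact e.toEquiv.extend_apply f 0 (x, y)
    have comap_volume : (volume.prod volume).comap e = volume := by
      rw [← MeasurableEquiv.map_symm]
      exact (volume_preserving_piFinSuccAbove (fun _ => ℝ) (Fin.last n)).symm.map_eq
    have pair := (outer.prod inner).comap e.measurableEmbedding
    simp only [extend_snoc, comap_volume] at pair
    exact pair

end Herz

section Sequence

variable {X ι : Type u} [MeasurableSpace X] [Countable ι] [MeasurableSpace ι]
  [MeasurableSingletonClass ι] {𝕜 : Type*} [RCLike 𝕜]

theorem measurable_nnnorm_uncurry {F : ι → X → 𝕜} (hF : ∀ j, Measurable (F j)) :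
    Measurable fun w : X × ι => (‖F w.2 w.1‖₊ : ℝ≥0∞) :=
  measurable_from_prod_countable_left fun j => (hF j).nnnorm.coe_nnreal_ennreal

theorem lintegral_tsum_nnnorm_mul {μ : Measure X} {F G : ι → X → 𝕜} (hF : ∀ j, Measurable (F j))
    (hG : ∀ j, Measurable (G j)) :
    ∫⁻ x, ∑' j, (‖F j x * G j x‖₊ : ℝ≥0∞) ∂μ =
      ∫⁻ w, (‖F w.2 w.1‖₊ : ℝ≥0∞) * ‖G w.2 w.1‖₊ ∂μ.prod Measure.count := by
  have hFG : Measurable fun w : X × ι => (‖F w.2 w.1‖₊ : ℝ≥0∞) * ‖G w.2 w.1‖₊ :=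
    (measurable_nnnorm_uncurry hF).mul (measurable_nnnorm_uncurry hG)
  rw [lintegral_prod _ hFG.aemeasurable]
  simp only [lintegral_count, nnnorm_mul, ENNReal.coe_mul]

theorem IsAssocPair.eq_iSup_nnnorm_eq_one {μ : Measure X} {N N' : (X × ι → ℝ≥0∞) → ℝ≥0∞}
    (H : IsAssocPair (μ.prod Measure.count) N N') {F : ι → X → 𝕜} (hF : ∀ j, Measurable (F j)) :
    N (fun w => ‖F w.2 w.1‖₊) =
      ⨆ (G : ι → X → 𝕜) (_ : ∀ j, Measurable (G j)) (_ : N' (fun w => ‖G w.2 w.1‖₊) = 1),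
        ∫⁻ x, ∑' j, (‖F j x * G j x‖₊ : ℝ≥0∞) ∂μ := by
  rw [H.eq_iSup_eq_one (measurable_nnnorm_uncurry hF)]
  apply le_antisymm
  · refine iSup₂_le fun g hg => iSup₂_le fun hg_top hg₁ => ?_
    let G (j : ι) (x : X) : 𝕜 := ((g (x, j)).toReal : 𝕜)
    have nnnorm_G (w : X × ι) : (‖G w.2 w.1‖₊ : ℝ≥0∞) = g w := by
      simp [G, hg_top, ← enorm_eq_nnnorm]
    have hG (j : ι) : Measurable (G j) := by fun_prop
    refine le_iSup₂_of_le G hG (le_iSup_of_le (by simpa only [nnnorm_G] using hg₁) ?_)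
    rw [lintegral_tsum_nnnorm_mul hF hG]
    simp only [nnnorm_G, le_refl]
  · refine iSup₂_le fun G hG => iSup_le fun hG₁ => ?_
    rw [lintegral_tsum_nnnorm_mul hF hG]
    exact le_iSup₂_of_le _ (measurable_nnnorm_uncurry hG)
      (le_iSup₂_of_le (fun _ => coe_ne_top) hG₁ le_rfl)

end Sequence

/-- norm duality for `l^r`-Herz type mixed-norm spaces. -/
theorem mixedHerz_seq_norm_dual (n : ℕ) (r r' : ℝ≥0∞) (hr : 1 ≤ r)
    (hrr : 1 / r + 1 / r' = 1)
    (α : Fin n → ℝ) (p q p' q' : Fin n → ℝ≥0∞)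
    (hp : ∀ i, 1 ≤ p i) (hq : ∀ i, 1 ≤ q i)
    (hp' : ∀ i, 1 / p i + 1 / p' i = 1) (hq' : ∀ i, 1 / q i + 1 / q' i = 1)
    (F : ℤ → (Fin n → ℝ) → ℂ) (hF : ∀ j, Measurable (F j)) :
    herzSeqNorm n r α p q F =
      ⨆ (G : ℤ → (Fin n → ℝ) → ℂ) (_ : ∀ j, Measurable (G j))
        (_ : herzSeqNorm n r' (-α) p' q' G = 1),
        ∫⁻ x, ∑' j : ℤ, (‖F j x * G j x‖₊ : ℝ≥0∞) := by
  simp only [one_div, ← ENNReal.holderConjugate_iff] at hrr hp' hq'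
  exact ((isAssocPair_mixedHerzNormE n α p q p' q' hp' hq').prod
    isAssocPair_lpZNorm).eq_iSup_nnnorm_eq_one hF
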